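/- arXiv:2412.18959 — 2 statements merged into one kernel-verified Lean document; each statement's English description precedes it below -/
import Mathlib

section
/- If (B' | A') and (B'' | A'') are irreducible skew-symmetric augmented matrices that are S-equivalent, then there exists a permutation matrix P such that P B' Pᵀ = B'' and P A' = A''; in particular they have the same dimension. -/
/-- A skew-symmetric augmented matrix `(B ∣ A)` of dimension `n`:
`B` is an `n × n` integer matrix with `Bᵀ = -B` and `A` is an integer
column vector of length `n`.  Dimension `0` gives the empty matrix. -/
structure SkewAug where
  n : ℕ
  B : Matrix (Fin n) (Fin n) ℤ
  A : Fin n → ℤ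
  skew : B.transpose = -B

namespace SkewAug

/-- The permutation matrix of a permutation `σ` of `Fin n`. -/
def permMatrixOf {n : ℕ} (σ : Equiv.Perm (Fin n)) : Matrix (Fin n) (Fin n) ℤ :=
  Matrix.of fun i j => if σ j = i then 1 else 0

/-- `P` is a permutation matrix. -/
def IsPermMatrix {n : ℕ} (P : Matrix (Fin n) (Fin n) ℤ) : Prop :=
  ∃ σ : Equiv.Perm (Fin n), P = permMatrixOf σ

/-- `PermStep M N` : `N` is a permutation of `M`, i.e. there is a permutation
matrix `P` with `N = (P M.B Pᵀ ∣ P M.A)`. -/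
def PermStep (M N : SkewAug) : Prop :=
  ∃ (h : M.n = N.n) (P : Matrix (Fin N.n) (Fin N.n) ℤ),
    IsPermMatrix P ∧
    N.B = P * (Matrix.reindex (finCongr h) (finCongr h) M.B) * P.transpose ∧
    N.A = P.mulVec (fun i => M.A (Fin.cast h.symm i))

/-- `DeleteAt M S N` : `N` is obtained from `M` by deleting the rows and
columns of `M.B` indexed by `S` and the entries of `M.A` indexed by `S`. -/
def DeleteAt (M : SkewAug) (S : Set (Fin M.n)) (N : SkewAug) : Prop :=
  ∃ e : Fin N.n → Fin M.n, StrictMono e ∧ (∀ k, k ∈ Set.range e ↔ k ∉ S) ∧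
    (∀ i j, N.B i j = M.B (e i) (e j)) ∧ (∀ i, N.A i = M.A (e i))

/-- The condition allowing a reduction of type 1 at index `j`:
`A j = 0` and the `j`-th column of `B` is the zero vector or equals `A`. -/
def Red1Cond (M : SkewAug) (j : Fin M.n) : Prop :=
  M.A j = 0 ∧ ((∀ i, M.B i j = 0) ∨ (∀ i, M.B i j = M.A i))

/-- The condition allowing a reduction of type 2 at distinct indices `r, t`:
`A r = -A t` and the sum of the `r`-th and `t`-th columns of `B` equals `A`. -/
def Red2Cond (M : SkewAug) (r t : Fin M.n) : Prop :=
  r ≠ t ∧ M.A r = -M.A t ∧ ∀ i, M.B i r + M.B i t = M.A i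

/-- `N` is obtained from `M` by a reduction of type 1. -/
def Red1 (M N : SkewAug) : Prop :=
  ∃ j : Fin M.n, Red1Cond M j ∧ DeleteAt M {j} N

/-- `N` is obtained from `M` by a reduction of type 2. -/
def Red2 (M N : SkewAug) : Prop :=
  ∃ r t : Fin M.n, Red2Cond M r t ∧ DeleteAt M {r, t} N

/-- A single move: a permutation, a reduction of type 1 or 2, or an
extension of type 1 or 2 (the inverse of a reduction). -/
def Move (M N : SkewAug) : Prop :=
  PermStep M N ∨ Red1 M N ∨ Red2 M N ∨ Red1 N M ∨ Red2 N M

/-- S-equivalence: `M` can be transformed into `N` by a finite sequence of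
moves. -/
def SEquiv : SkewAug → SkewAug → Prop :=
  Relation.ReflTransGen Move

/-- A reduction of type 1 or type 2 can be applied to `M`. -/
def Reducible (M : SkewAug) : Prop :=
  (∃ j, Red1Cond M j) ∨ (∃ r t, Red2Cond M r t)

/-- `M` is irreducible: no reduction of type 1 or type 2 can be applied. -/
def Irreducible (M : SkewAug) : Prop := ¬ Reducible M

/-- The empty skew-symmetric augmented matrix. -/
def empty : SkewAug := ⟨0, 0, 0, by simp⟩

/-- `M` is trivial if it is S-equivalent to the empty matrix. -/
def Trivial (M : SkewAug) : Prop := SEquiv M empty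

end SkewAug

/-!
Border `(B ∣ A)` by `A`: for `j` in `Fin n` let `c j` be the column `j` of `B` followed by `-A j`,
and let `s` be the column `A` followed by `0`. A reduction of type 1 deletes an index `j` with
`c j = 0` or `c j = s`, and one of type 2 deletes two indices `r ≠ t` with `c r + c t = s`. Such
relations survive the deletion of further indices, so two reductions at disjoint sets of indices
commute. If two reductions share the index `r`, then the column that can cancel against `c r` is
forced to be `s - c r`. Hence they agree, or one is completed to the other by a reduction of type 1,
or they delete `{r, t}` and `{r, u}` with `c t = c u`; in the last case exchanging `t` and `u` is a
symmetry, by skew-symmetry, and the two results agree up to a permutation. Reduction up to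
permutation thus has the diamond property, and irreducible representatives are unique.
-/

namespace SkewAug

open Function Relation

variable {M N P : SkewAug} {S T : Set (Fin M.n)} {r t u : Fin M.n} {k : ℕ}

lemma neg_B_apply (M : SkewAug) (i j : Fin M.n) : -M.B i j = M.B j i :=
  (congrFun₂ M.skew i j).symm

/-- The skew-symmetric augmented matrix with entries `B (e i) (e j)` and `A (e i)`. It serves both
for deletions (`e` injective) and for permutations (`e` bijective). -/
abbrev submatrix (M : SkewAug) (e : Fin k → Fin M.n) : SkewAug where
  n := k
  B := M.B.submatrix e e
  A := M.A ∘ e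
  skew := by rw [Matrix.transpose_submatrix, M.skew]; rfl

lemma eq_submatrix {e : Fin N.n → Fin M.n} (hB : N.B = M.B.submatrix e e) (hA : N.A = M.A ∘ e) :
    N = M.submatrix e := by
  simp only [submatrix, ← hB, ← hA]

lemma submatrix_swap_comp (hA : M.A t = M.A u) (hB : ∀ i, M.B i t = M.B i u)
    (e : Fin k → Fin M.n) : M.submatrix (Equiv.swap t u ∘ e) = M.submatrix e := by
  have hcol (i x) : M.B i (Equiv.swap t u x) = M.B i x := Equiv.apply_swap_eq_self (hB i) x
  refine eq_submatrix (Matrix.ext fun i x => ?_) (funext fun i => ?_)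
  · simp only [Matrix.submatrix_apply, comp_apply]
    rw [hcol, ← neg_B_apply, hcol, neg_B_apply]
  · exact Equiv.apply_swap_eq_self hA (e i)

lemma Red1Cond.submatrix {e : Fin k → Fin M.n} {j : Fin k} (h : Red1Cond M (e j)) :
    Red1Cond (M.submatrix e) j :=
  ⟨h.1, h.2.imp (fun h i => h (e i)) (fun h i => h (e i))⟩

lemma Red2Cond.submatrix {e : Fin k → Fin M.n} {r t : Fin k} (h : Red2Cond M (e r) (e t)) :
    Red2Cond (M.submatrix e) r t :=
  ⟨ne_of_apply_ne e h.1, h.2.1, fun i => h.2.2 (e i)⟩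

lemma Red2Cond.symm (h : Red2Cond M r t) : Red2Cond M t r :=
  ⟨h.1.symm, by rw [h.2.1, neg_neg], fun i => by rw [add_comm, h.2.2]⟩

lemma Red2Cond.red1Cond (h : Red2Cond M r t) (hr : Red1Cond M r) : Red1Cond M t := by
  obtain ⟨-, hA, hsum⟩ := h
  obtain ⟨hAr, hcol⟩ := hr
  refine ⟨by linarith, hcol.symm.imp (fun hr i => ?_) (fun hr i => ?_)⟩ <;>
    linarith [hr i, hsum i]

lemma Red2Cond.A_eq (ht : Red2Cond M r t) (hu : Red2Cond M r u) : M.A t = M.A u :=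
  neg_injective (ht.2.1.symm.trans hu.2.1)

lemma Red2Cond.B_eq (ht : Red2Cond M r t) (hu : Red2Cond M r u) (i : Fin M.n) :
    M.B i t = M.B i u :=
  add_left_cancel ((ht.2.2 i).trans (hu.2.2 i).symm)

/-- `S` is the set of indices deleted by a reduction of `M`, or empty. The empty set is included so
that permutations count as trivial reductions. -/
inductive Removable (M : SkewAug) : Set (Fin M.n) → Prop
  | empty : Removable M ∅
  | singleton {j : Fin M.n} : Red1Cond M j → Removable M {j}
  | pair {r t : Fin M.n} : Red2Cond M r t → Removable M {r, t}

lemma Removable.eq_singleton_or_eq_pair (hS : Removable M S) (hr : r ∈ S) :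
    (S = {r} ∧ Red1Cond M r) ∨ ∃ t, S = {r, t} ∧ Red2Cond M r t := by
  cases hS with
  | empty => exact hr.elim
  | singleton h =>
    obtain rfl := hr
    exact .inl ⟨rfl, h⟩
  | pair h =>
    obtain rfl | rfl := hr
    · exact .inr ⟨_, rfl, h⟩
    · exact .inr ⟨_, Set.pair_comm _ _, h.symm⟩

lemma Removable.eq_empty (hS : Removable M S) (hM : Irreducible M) : S = ∅ := by
  cases hS with
  | empty => rfl
  | singleton h => exact (hM (.inl ⟨_, h⟩)).elim
  | pair h => exact (hM (.inr ⟨_, _, h⟩)).elim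

lemma Removable.preimage (hS : Removable M S) {e : Fin k → Fin M.n} (he : Injective e)
    (hSe : S ⊆ Set.range e) : Removable (M.submatrix e) (e ⁻¹' S) := by
  cases hS with
  | empty => exact .empty
  | singleton h =>
    obtain ⟨j, rfl⟩ := Set.singleton_subset_iff.1 hSe
    rw [← Set.image_singleton, he.preimage_image]
    exact .singleton h.submatrix
  | pair h =>
    obtain ⟨⟨r, rfl⟩, ⟨t, rfl⟩⟩ := Set.pair_subset_iff.1 hSe
    rw [← Set.image_pair, he.preimage_image]
    exact .pair h.submatrix

/-- `N` is obtained from `M` by deleting the indices in `S` and then permuting the remaining ones;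
unlike in `DeleteAt`, their order need not be kept. -/
def IsDeletion (M : SkewAug) (S : Set (Fin M.n)) (N : SkewAug) : Prop :=
  ∃ (k : ℕ) (e : Fin k → Fin M.n), Injective e ∧ Set.range e = Sᶜ ∧ N = M.submatrix e

lemma DeleteAt.isDeletion (h : DeleteAt M S N) : IsDeletion M S N := by
  obtain ⟨e, hmono, hrange, hB, hA⟩ := h
  exact ⟨N.n, e, hmono.injective, Set.ext hrange, eq_submatrix (Matrix.ext hB) (funext hA)⟩

lemma exists_isDeletion (M : SkewAug) (S : Set (Fin M.n)) : ∃ N, IsDeletion M S N := by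
  let e := (Finite.equivFin ↥Sᶜ).symm
  refine ⟨_, _, Subtype.val ∘ e, Subtype.val_injective.comp e.injective, ?_, rfl⟩
  rw [e.surjective.range_comp, Subtype.range_coe]

lemma IsDeletion.preimage (h : IsDeletion M S P) {e : Fin k → Fin M.n} (he : Injective e)
    (hS : Sᶜ ⊆ Set.range e) : IsDeletion (M.submatrix e) (e ⁻¹' S) P := by
  obtain ⟨l, f, hf, hrange, rfl⟩ := h
  obtain ⟨g, rfl⟩ := Set.range_subset_range_iff_exists_comp.1 (hrange.trans_subset hS)
  refine ⟨l, g, hf.of_comp, ?_, rfl⟩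
  rw [← Set.preimage_compl, ← hrange, Set.range_comp, he.preimage_image]

lemma IsDeletion.pair_of_red2Cond (h : IsDeletion M {r, u} N) (ht : Red2Cond M r t)
    (hu : Red2Cond M r u) : IsDeletion M {r, t} N := by
  obtain ⟨k, e, he, hrange, rfl⟩ := h
  refine ⟨k, Equiv.swap t u ∘ e, (Equiv.swap t u).injective.comp he, ?_,
    (submatrix_swap_comp (ht.A_eq hu) (ht.B_eq hu) e).symm⟩
  rw [Set.range_comp, hrange, Set.image_compl_eq (Equiv.swap t u).bijective, Set.image_pair,
    Equiv.swap_apply_of_ne_of_ne ht.1 hu.1, Equiv.swap_apply_right]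

lemma isDeletion_empty_iff :
    IsDeletion M ∅ N ↔ ∃ (k : ℕ) (σ : Fin k ≃ Fin M.n), N = M.submatrix σ := by
  constructor
  · rintro ⟨k, e, he, hrange, rfl⟩
    have hsurj : Surjective e := Set.range_eq_univ.1 (hrange.trans Set.compl_empty)
    exact ⟨k, Equiv.ofBijective e ⟨he, hsurj⟩, rfl⟩
  · rintro ⟨k, σ, rfl⟩
    exact ⟨k, σ, σ.injective, by simp, rfl⟩

lemma permMatrixOf_eq_permMatrix {n : ℕ} (σ : Equiv.Perm (Fin n)) :
    permMatrixOf σ = σ⁻¹.permMatrix ℤ := by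
  ext i j
  simp [permMatrixOf, PEquiv.toMatrix_apply, Equiv.symm_apply_eq, eq_comm (a := i)]

lemma permMatrixOf_mulVec {n : ℕ} (σ : Equiv.Perm (Fin n)) (v : Fin n → ℤ) :
    (permMatrixOf σ).mulVec v = v ∘ σ.symm := by
  rw [permMatrixOf_eq_permMatrix, Matrix.permMatrix_mulVec]
  rfl

lemma permMatrixOf_mul_mul_transpose {n : ℕ} (σ : Equiv.Perm (Fin n))
    (B : Matrix (Fin n) (Fin n) ℤ) :
    permMatrixOf σ * B * (permMatrixOf σ).transpose = B.submatrix σ.symm σ.symm := by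
  simp only [permMatrixOf_eq_permMatrix, Matrix.transpose_permMatrix, inv_inv,
    PEquiv.toMatrix_toPEquiv_mul, PEquiv.mul_toMatrix_toPEquiv]
  rfl

lemma permStep_iff_isDeletion_empty : PermStep M N ↔ IsDeletion M ∅ N := by
  rw [isDeletion_empty_iff]
  constructor
  · rintro ⟨h, _, ⟨σ, rfl⟩, hB, hA⟩
    rw [permMatrixOf_mul_mul_transpose] at hB
    rw [permMatrixOf_mulVec] at hA
    exact ⟨N.n, σ.symm.trans (finCongr h).symm, eq_submatrix hB hA⟩
  · rintro ⟨k, σ, rfl⟩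
    obtain rfl : M.n = k := Fin.equiv_iff_eq.1 ⟨σ.symm⟩
    exact ⟨rfl, permMatrixOf σ.symm, ⟨_, rfl⟩, (permMatrixOf_mul_mul_transpose σ.symm M.B).symm,
      (permMatrixOf_mulVec σ.symm M.A).symm⟩

lemma IsDeletion.permStep (hN : IsDeletion M S N) (hP : IsDeletion M S P) : PermStep N P := by
  obtain ⟨k, e, he, hrange, rfl⟩ := hN
  have hS : e ⁻¹' S = ∅ := by
    rw [Set.preimage_eq_empty_iff, hrange]
    exact disjoint_compl_right
  exact permStep_iff_isDeletion_empty.2 (hS ▸ hP.preimage he hrange.ge)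

lemma PermStep.refl (M : SkewAug) : PermStep M M :=
  permStep_iff_isDeletion_empty.2 (isDeletion_empty_iff.2 ⟨M.n, Equiv.refl _, rfl⟩)

lemma PermStep.symm (h : PermStep M N) : PermStep N M :=
  (permStep_iff_isDeletion_empty.1 h).permStep (permStep_iff_isDeletion_empty.1 (.refl M))

lemma PermStep.trans (hMN : PermStep M N) (hNP : PermStep N P) : PermStep M P :=
  (permStep_iff_isDeletion_empty.1 hMN.symm).permStep (permStep_iff_isDeletion_empty.1 hNP)

lemma PermStep.irreducible (h : PermStep M N) (hM : Irreducible M) : Irreducible N := by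
  obtain ⟨k, σ, rfl⟩ := isDeletion_empty_iff.1 (permStep_iff_isDeletion_empty.1 h.symm)
  rintro (⟨j, hj⟩ | ⟨r, t, hrt⟩)
  · obtain ⟨j, rfl⟩ := σ.surjective j
    exact hM (.inl ⟨j, hj.submatrix⟩)
  · obtain ⟨r, rfl⟩ := σ.surjective r
    obtain ⟨t, rfl⟩ := σ.surjective t
    exact hM (.inr ⟨r, t, hrt.submatrix⟩)

/-- `N` is obtained from `M` by at most one reduction of type 1 or 2, up to a permutation. -/
def Reduces (M N : SkewAug) : Prop :=
  ∃ S, Removable M S ∧ IsDeletion M S N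

lemma PermStep.reduces (h : PermStep M N) : Reduces M N :=
  ⟨∅, .empty, permStep_iff_isDeletion_empty.1 h⟩

lemma Red1.reduces (h : Red1 M N) : Reduces M N :=
  let ⟨_, hj, hdel⟩ := h
  ⟨_, .singleton hj, hdel.isDeletion⟩

lemma Red2.reduces (h : Red2 M N) : Reduces M N :=
  let ⟨_, _, hrt, hdel⟩ := h
  ⟨_, .pair hrt, hdel.isDeletion⟩

lemma Reduces.permStep (h : Reduces M N) (hM : Irreducible M) : PermStep M N := by
  obtain ⟨S, hS, hdel⟩ := h
  rw [hS.eq_empty hM] at hdel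
  exact permStep_iff_isDeletion_empty.2 hdel

lemma permStep_of_reflTransGen_reduces (h : ReflTransGen Reduces M N) (hM : Irreducible M) :
    PermStep M N := by
  induction h with
  | refl => exact .refl M
  | tail _ hred ih => exact ih.trans (hred.permStep (ih.irreducible hM))

lemma IsDeletion.reduces_of_subset (hN : IsDeletion M S N) (hP : IsDeletion M T P) (hST : S ⊆ T)
    (hrem : Removable M (T \ S)) : Reduces N P := by
  obtain ⟨k, e, he, hrange, rfl⟩ := hN
  have hpre : e ⁻¹' (T \ S) = e ⁻¹' T := by
    rw [Set.sdiff_eq, ← hrange, Set.preimage_inter_range]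
  have hdiff : T \ S ⊆ Set.range e := hrange ▸ Set.sdiff_subset_compl T S
  have hcompl : Tᶜ ⊆ Set.range e := hrange ▸ Set.compl_subset_compl.2 hST
  exact ⟨e ⁻¹' T, hpre ▸ hrem.preimage he hdiff, hP.preimage he hcompl⟩

lemma IsDeletion.reduces_of_red1Cond (hN : IsDeletion M {r} N) (hP : IsDeletion M {r, t} P)
    (hr : Red1Cond M r) (hrt : Red2Cond M r t) : Reduces N P :=
  hN.reduces_of_subset hP (by simp) <| by
    rw [Set.pair_sdiff_left hrt.1]
    exact .singleton (hrt.red1Cond hr)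

lemma exists_reduces_of_disjoint (hS : Removable M S) (hT : Removable M T) (hST : Disjoint S T)
    (hN : IsDeletion M S N) (hP : IsDeletion M T P) : ∃ Q, Reduces N Q ∧ Reduces P Q := by
  obtain ⟨Q, hQ⟩ := exists_isDeletion M (S ∪ T)
  refine ⟨Q, hN.reduces_of_subset hQ Set.subset_union_left ?_,
    hP.reduces_of_subset hQ Set.subset_union_right ?_⟩
  · rwa [Set.union_sdiff_cancel_left hST.le_bot]
  · rwa [Set.union_sdiff_cancel_right hST.le_bot]

lemma reduces_or_reduces_of_not_disjoint (hS : Removable M S) (hT : Removable M T)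
    (hST : ¬Disjoint S T) (hN : IsDeletion M S N) (hP : IsDeletion M T P) :
    Reduces N P ∨ Reduces P N := by
  obtain ⟨r, hrS, hrT⟩ := Set.not_disjoint_iff.1 hST
  obtain ⟨rfl, hr⟩ | ⟨t, rfl, ht⟩ := hS.eq_singleton_or_eq_pair hrS <;>
    obtain ⟨rfl, hr'⟩ | ⟨u, rfl, hu⟩ := hT.eq_singleton_or_eq_pair hrT
  · exact .inl (hN.permStep hP).reduces
  · exact .inl (hN.reduces_of_red1Cond hP hr hu)
  · exact .inr (hP.reduces_of_red1Cond hN hr' ht)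
  · exact .inl (hN.permStep (hP.pair_of_red2Cond ht hu)).reduces

theorem Reduces.diamond (hN : Reduces M N) (hP : Reduces M P) :
    ∃ Q, Reduces N Q ∧ Reduces P Q := by
  obtain ⟨S, hS, hN⟩ := hN
  obtain ⟨T, hT, hP⟩ := hP
  by_cases hST : Disjoint S T
  · exact exists_reduces_of_disjoint hS hT hST hN hP
  · obtain hNP | hPN := reduces_or_reduces_of_not_disjoint hS hT hST hN hP
    · exact ⟨P, hNP, (PermStep.refl P).reduces⟩
    · exact ⟨N, (PermStep.refl N).reduces, hPN⟩

lemma equivalence_join_reduces : Equivalence (Join (ReflTransGen Reduces)) :=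
  equivalence_join_reflTransGen fun _ _ _ hN hP =>
    let ⟨Q, hNQ, hPQ⟩ := hN.diamond hP
    ⟨Q, .single hNQ, .single hPQ⟩

lemma Move.reduces_or_reduces (h : Move M N) : Reduces M N ∨ Reduces N M := by
  obtain h | h | h | h | h := h
  exacts [.inl h.reduces, .inl h.reduces, .inl h.reduces, .inr h.reduces, .inr h.reduces]

lemma Move.join_reduces (h : Move M N) : Join (ReflTransGen Reduces) M N := by
  obtain h | h := h.reduces_or_reduces
  · exact ⟨N, .single h, .refl⟩
  · exact ⟨M, .refl, .single h⟩

lemma SEquiv.join_reduces (h : SEquiv M N) : Join (ReflTransGen Reduces) M N :=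
  reflTransGen_le_of_equivalence_of_le equivalence_join_reduces
    (fun _ _ hmove => hmove.join_reduces) M N h

end SkewAug

/-- Two irreducible skew-symmetric augmented matrices that are
S-equivalent differ by a permutation matrix; in particular they have the same
dimension. -/
theorem irreducible_sEquiv_iff_permStep (M N : SkewAug)
    (hM : SkewAug.Irreducible M) (hN : SkewAug.Irreducible N)
    (h : SkewAug.SEquiv M N) :
    SkewAug.PermStep M N ∧ M.n = N.n := by
  obtain ⟨P, hMP, hNP⟩ := h.join_reduces
  have hMP : SkewAug.PermStep M P := SkewAug.permStep_of_reflTransGen_reduces hMP hM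
  have hNP : SkewAug.PermStep N P := SkewAug.permStep_of_reflTransGen_reduces hNP hN
  have hMN : SkewAug.PermStep M N := hMP.trans hNP.symm
  exact ⟨hMN, hMN.1⟩
end

section
/- For every natural number k ≥ 0, the skew-symmetric augmented matrix (B | A) of dimension 2k+1 over the integers defined in block form by B = [[0_{k×k}, -2·J_{k×k}, -1_{k×1}], [2·J_{k×k}, 0_{k×k}, 1_{k×1}], [1_{1×k}, -1_{1×k}, 0]] (where J denotes the all-ones matrix, 1 the all-ones vector, and 0 the zero block) and A = (-2, ..., -2, 2, ..., 2, 0)ᵀ (with k entries equal to -2 followed by k entries equal to 2 and a final 0) is trivial, i.e., S-equivalent to the empty matrix. -/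
/-- The block matrix
`[[0, -2·J, -1], [2·J, 0, 1], [1, -1, 0]]` of dimension `2k + 1`, where `J`
is the `k × k` all-ones matrix and `1` the all-ones vector. -/
def blockB (k : ℕ) : Matrix (Fin (2 * k + 1)) (Fin (2 * k + 1)) ℤ :=
  Matrix.of fun i j =>
    if i.val < k then
      (if j.val < k then 0 else if j.val < 2 * k then -2 else -1)
    else if i.val < 2 * k then
      (if j.val < k then 2 else if j.val < 2 * k then 0 else 1)
    else
      (if j.val < k then 1 else if j.val < 2 * k then -1 else 0)

/-- The column vector `(-2, …, -2, 2, …, 2, 0)ᵀ` with `k` entries `-2`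
followed by `k` entries `2` and a final `0`. -/
def blockA (k : ℕ) : Fin (2 * k + 1) → ℤ :=
  fun i => if i.val < k then -2 else if i.val < 2 * k then 2 else 0

/-- The skew-symmetric augmented matrix `(blockB k ∣ blockA k)`. -/
def blockSkewAug (k : ℕ) : SkewAug :=
  ⟨2 * k + 1, blockB k, blockA k, by
    ext i j
    simp only [blockB, Matrix.transpose_apply, Matrix.neg_apply, Matrix.of_apply]
    split_ifs <;> omega⟩

theorem range_succAbove_comp_succAbove {n : ℕ} (r : Fin (n + 2)) (t : Fin (n + 1)) :
    Set.range (r.succAbove ∘ t.succAbove) = {r, r.succAbove t}ᶜ := by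
  rw [Set.range_comp, Fin.range_succAbove,
    Set.image_compl_eq_range_sdiff_image Fin.succAbove_right_injective, Fin.range_succAbove,
    Set.image_singleton, Set.sdiff_eq, ← Set.compl_union, Set.singleton_union]

theorem map_univ_eq_cons_removeNth {α : Type*} {n : ℕ} (s : Fin (n + 1) → α) (r : Fin (n + 1)) :
    Finset.univ.val.map s = s r ::ₘ Finset.univ.val.map (r.removeNth s) := by
  rw [Fin.univ_succAbove n r, Finset.cons_val, Multiset.map_cons, Finset.map_val, Multiset.map_map]
  rfl

theorem map_neg_eq_of_map_neg_cons_cons_neg {G : Type*} [InvolutiveNeg G] {m : Multiset G} {a : G}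
    (h : (a ::ₘ -a ::ₘ m).map Neg.neg = a ::ₘ -a ::ₘ m) : m.map Neg.neg = m := by
  rw [Multiset.map_cons, Multiset.map_cons, neg_neg, Multiset.cons_swap] at h
  exact (Multiset.cons_inj_right _).mp ((Multiset.cons_inj_right _).mp h)

theorem exists_succAbove_eq_neg {G : Type*} [Neg G] {n : ℕ} {s : Fin (n + 1) → G}
    (hs : (Finset.univ.val.map s).map Neg.neg = Finset.univ.val.map s) {r : Fin (n + 1)}
    (hr : -s r ≠ s r) : ∃ t : Fin n, s (r.succAbove t) = -s r := by
  have hmem : -s r ∈ Finset.univ.val.map s := by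
    rw [← hs]
    exact Multiset.mem_map_of_mem _ (Multiset.mem_map_of_mem s (Finset.mem_univ r))
  obtain ⟨i, -, hi⟩ := Multiset.mem_map.mp hmem
  have hir : i ≠ r := by
    rintro rfl
    exact hr hi.symm
  obtain ⟨t, rfl⟩ := Fin.exists_succAbove_eq hir
  exact ⟨t, hi⟩

namespace SkewAug

theorem Trivial.of_red1 {M N : SkewAug} (h : Red1 M N) (hN : N.Trivial) : M.Trivial :=
  .head (.inr (.inl h)) hN

theorem Trivial.of_red2 {M N : SkewAug} (h : Red2 M N) (hN : N.Trivial) : M.Trivial :=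
  .head (.inr (.inr (.inl h))) hN

/-- The skew-symmetric augmented matrix `(B ∣ A)` of the differences of an integer vector `s`, with
`B i j = s i - s j`. The factor `2` in `A i = 2 * s i` is what makes the columns of two opposite
entries of `s` add up to `A`. -/
def ofDifferences {n : ℕ} (s : Fin n → ℤ) : SkewAug where
  n := n
  B := Matrix.of fun i j => s i - s j
  A := fun i => 2 * s i
  skew := by ext i j; simp

theorem ofDifferences_fin_zero (s : Fin 0 → ℤ) : ofDifferences s = empty := by
  unfold ofDifferences empty
  congr <;> exact Subsingleton.elim _ _

theorem deleteAt_ofDifferences {m n : ℕ} (s : Fin n → ℤ) {S : Set (Fin n)} (e : Fin m ↪o Fin n)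
    (he : Set.range e = Sᶜ) : DeleteAt (ofDifferences s) S (ofDifferences (s ∘ e)) :=
  ⟨e, e.strictMono, fun _ => he ▸ Iff.rfl, fun _ _ => rfl, fun _ => rfl⟩

theorem red1Cond_ofDifferences_zero {n : ℕ} (j : Fin n) :
    Red1Cond (ofDifferences (0 : Fin n → ℤ)) j :=
  ⟨mul_zero 2, .inl fun _ => sub_zero (0 : ℤ)⟩

theorem red1_ofDifferences_zero (n : ℕ) :
    Red1 (ofDifferences (0 : Fin (n + 1) → ℤ)) (ofDifferences (0 : Fin n → ℤ)) :=
  ⟨(0 : Fin (n + 1)), red1Cond_ofDifferences_zero 0,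
    deleteAt_ofDifferences 0 (Fin.succAboveOrderEmb 0) (Fin.range_succAbove 0)⟩

theorem red2Cond_ofDifferences {n : ℕ} {s : Fin n → ℤ} {r t : Fin n} (hrt : r ≠ t)
    (h : s r + s t = 0) : Red2Cond (ofDifferences s) r t :=
  ⟨hrt, show 2 * s r = -(2 * s t) by linarith,
    fun i => show s i - s r + (s i - s t) = 2 * s i by linarith⟩

theorem red2_ofDifferences {n : ℕ} {s : Fin (n + 2) → ℤ} {r : Fin (n + 2)} {t : Fin (n + 1)}
    (h : s r + s (r.succAbove t) = 0) :
    Red2 (ofDifferences s) (ofDifferences (t.removeNth (r.removeNth s))) :=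
  ⟨r, r.succAbove t, red2Cond_ofDifferences (r.succAbove_ne t).symm h,
    deleteAt_ofDifferences s (t.succAboveOrderEmb.trans r.succAboveOrderEmb)
      (range_succAbove_comp_succAbove r t)⟩

theorem trivial_ofDifferences_zero : ∀ n : ℕ, (ofDifferences (0 : Fin n → ℤ)).Trivial
  | 0 => ofDifferences_fin_zero 0 ▸ .refl
  | n + 1 => .of_red1 (red1_ofDifferences_zero n) (trivial_ofDifferences_zero n)

end SkewAug

theorem blockSkewAug_trivial_general {n : ℕ} (s : Fin n → ℤ)
    (hs : (Finset.univ.val.map s).map Neg.neg = Finset.univ.val.map s) :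
    (SkewAug.ofDifferences s).Trivial := by
  induction n using Nat.strong_induction_on with
  | h n ih =>
    by_cases hzero : s = 0
    · exact hzero ▸ SkewAug.trivial_ofDifferences_zero n
    obtain ⟨r, hr⟩ := Function.ne_iff.mp hzero
    obtain _ | n := n
    · exact r.elim0
    obtain ⟨t, ht⟩ := exists_succAbove_eq_neg hs (neg_ne_self.mpr hr)
    obtain _ | n := n
    · exact t.elim0
    have hsum : s r + s (r.succAbove t) = 0 := by rw [ht, add_neg_cancel]
    refine .of_red2 (SkewAug.red2_ofDifferences hsum) (ih n (by omega) _ ?_)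
    have hcons : Finset.univ.val.map s =
        s r ::ₘ -s r ::ₘ Finset.univ.val.map (t.removeNth (r.removeNth s)) := by
      rw [map_univ_eq_cons_removeNth s r, map_univ_eq_cons_removeNth _ t, Fin.removeNth_apply, ht]
    rw [hcons] at hs
    exact map_neg_eq_of_map_neg_cons_cons_neg hs

/-- The vector `(-1, …, -1, 1, …, 1, 0)` of length `2k + 1` with `k` entries of either sign, whose
matrix of differences is `blockB k`. -/
def blockSign (k : ℕ) : Fin (2 * k + 1) → ℤ :=
  fun i => if i.val < k then -1 else if i.val < 2 * k then 1 else 0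

theorem blockSkewAug_eq_ofDifferences (k : ℕ) :
    blockSkewAug k = SkewAug.ofDifferences (blockSign k) := by
  have hB : blockB k = Matrix.of fun i j => blockSign k i - blockSign k j := by
    ext i j
    simp only [blockB, blockSign, Matrix.of_apply]
    split_ifs <;> rfl
  have hA : blockA k = fun i => 2 * blockSign k i := by
    ext i
    simp only [blockA, blockSign]
    split_ifs <;> rfl
  simp only [blockSkewAug, SkewAug.ofDifferences, hB, hA]

/-- The involution of `Fin (2k + 1)` that swaps the first `k` indices with the next `k` in order and
fixes the last index; it negates `blockSign k`. -/
def blockSwap (k : ℕ) : Equiv.Perm (Fin (2 * k + 1)) :=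
  Function.Involutive.toPerm
    (fun i => ⟨if i.val < k then i + k else if i.val < 2 * k then i - k else i, by grind⟩)
    (fun i => by grind)

theorem blockSign_blockSwap (k : ℕ) (i : Fin (2 * k + 1)) :
    blockSign k (blockSwap k i) = -blockSign k i := by
  change blockSign k ⟨if i.val < k then i + k else if i.val < 2 * k then i - k else i, _⟩ = _
  grind [blockSign]

theorem map_neg_map_blockSign (k : ℕ) :
    (Finset.univ.val.map (blockSign k)).map Neg.neg = Finset.univ.val.map (blockSign k) := by
  have hswap : Neg.neg ∘ blockSign k = blockSign k ∘ blockSwap k :=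
    funext fun i => (blockSign_blockSwap k i).symm
  rw [Multiset.map_map, hswap, ← Multiset.map_map, Multiset.map_univ_val_equiv]

/-- For every `k ≥ 0`, the skew-symmetric augmented matrix
`(blockB k ∣ blockA k)` of dimension `2k + 1` is trivial, i.e. S-equivalent
to the empty matrix. -/
theorem blockSkewAug_trivial (k : ℕ) : SkewAug.Trivial (blockSkewAug k) := by
  rw [blockSkewAug_eq_ofDifferences]
  exact blockSkewAug_trivial_general _ (map_neg_map_blockSign k)
end
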